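/- Let J be the vertex set of a connected component of the subgraph of G induced on V^U, with |J| ≥ 2. Then Σ_{j ∈ J} b_j is odd, and for every i ∈ J there exists a feasible b-matching f supported only on edges of G with both endpoints in J such that x_j(f) = b_j for every j ∈ J \ {i} and x_i(f) = b_i − 1. -/

import Mathlib

variable {V : Type*} [Fintype V] [DecidableEq V]

/-- The utility of vertex `i` under the b-matching `f`: the total weight of edges incident to `i`. -/
def bmUtil (G : SimpleGraph V) [DecidableRel G.Adj] (f : Sym2 V → ℕ) (i : V) : ℕ :=
  ∑ e ∈ G.edgeFinset.filter (fun e => i ∈ e), f e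

/-- `f` is a feasible b-matching for `(G, b)`. -/
def BMFeasible (G : SimpleGraph V) [DecidableRel G.Adj] (b : V → ℕ) (f : Sym2 V → ℕ) : Prop :=
  ∀ i, bmUtil G f i ≤ b i

/-- The size of a b-matching: the total weight over all edges. -/
def bmSize (G : SimpleGraph V) [DecidableRel G.Adj] (f : Sym2 V → ℕ) : ℕ :=
  ∑ e ∈ G.edgeFinset, f e

/-- `f` is a maximum b-matching for `(G, b)`. -/
def IsMaxBM (G : SimpleGraph V) [DecidableRel G.Adj] (b : V → ℕ) (f : Sym2 V → ℕ) : Prop :=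
  BMFeasible G b f ∧ ∀ g, BMFeasible G b g → bmSize G g ≤ bmSize G f

/-- Underdemanded vertices: unsaturated in at least one maximum b-matching. -/
def VU (G : SimpleGraph V) [DecidableRel G.Adj] (b : V → ℕ) : Set V :=
  {i | ∃ f, IsMaxBM G b f ∧ bmUtil G f i < b i}

/-- Overdemanded vertices: not underdemanded, with at least one underdemanded neighbor. -/
def VO (G : SimpleGraph V) [DecidableRel G.Adj] (b : V → ℕ) : Set V :=
  {i | i ∉ VU G b ∧ ∃ j ∈ VU G b, G.Adj i j}

/-- Perfectly demanded vertices. -/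
def VP (G : SimpleGraph V) [DecidableRel G.Adj] (b : V → ℕ) : Set V :=
  {i | i ∉ VU G b ∧ i ∉ VO G b}

/-!
The proof follows Gallai's lemma. Call `u` and `v` jointly unsaturated if some maximum b-matching
leaves a unit of capacity free at `u` and another one at `v`. Adjacent vertices never are, for the
edge between them could be increased. If `u`, `v` are jointly unsaturated and `w` is underdemanded,
then `w` is jointly unsaturated with `u` or `v`: among the maximum b-matchings with slack at `w`,
take one closest to a maximum b-matching with slack at `u` and `v`; unless it also has slack at `u`
or `v`, comparing sizes yields a two-edge alternating path along which it can be brought closer. By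
induction along walks, no two vertices, equal or not, of a connected set of at least two
underdemanded vertices are jointly unsaturated. Hence a maximum b-matching with slack at `i ∈ J` has
one unit of slack there and none elsewhere in `J`.

It also puts no weight on an edge from `j ∈ J` to a vertex `a` outside `V^U`. Otherwise, lower both
the weight of that edge and the capacity of `a` by one: the result is a maximum b-matching with
slack at `i` and `j` for capacities under which the vertices of `J` are still underdemanded.
-/

section SingleBounds

variable {W : Type*} [DecidableEq W] {x c : W → ℕ} {i : W}

lemma add_single_one_le_iff : x + Pi.single i 1 ≤ c ↔ x ≤ c ∧ x i < c i := by
  refine ⟨fun h => ⟨le_self_add.trans h, ?_⟩, fun ⟨hle, hlt⟩ j => ?_⟩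
  · simpa using h i
  · obtain rfl | hj := eq_or_ne j i
    · simpa using hlt
    · simpa [hj] using hle j

lemma exists_eq_add_single_one (h : 0 < x i) : ∃ y : W → ℕ, x = y + Pi.single i 1 := by
  have hle : 0 + Pi.single i 1 ≤ x := add_single_one_le_iff.2 ⟨zero_le, h⟩
  rw [zero_add] at hle
  exact ⟨x - Pi.single i 1, (tsub_add_cancel_of_le hle).symm⟩

end SingleBounds

section InducedComponent

variable {W : Type*} {H : SimpleGraph W} {s : Set W}

lemma preconnected_induce_image_supp (c : (H.induce s).ConnectedComponent) :
    (H.induce (Subtype.val '' c.supp)).Preconnected := by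
  let φ : (H.induce s).induce c.supp →g H.induce (Subtype.val '' c.supp) :=
    ⟨fun x => ⟨x, Set.mem_image_of_mem _ x.2⟩, id⟩
  have hφ : Function.Surjective φ := by
    rintro ⟨_, x, hx, rfl⟩
    exact ⟨⟨x, hx⟩, rfl⟩
  exact c.connected_toSimpleGraph.preconnected.map φ hφ

lemma mem_image_supp_of_adj (c : (H.induce s).ConnectedComponent) {u v : W}
    (hu : u ∈ Subtype.val '' c.supp) (hv : v ∈ s) (huv : H.Adj u v) :
    v ∈ Subtype.val '' c.supp := by
  obtain ⟨u, hu, rfl⟩ := hu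
  exact ⟨⟨v, hv⟩, c.mem_supp_of_adj_mem_supp hu huv, rfl⟩

end InducedComponent

section BMatching

variable {G : SimpleGraph V} [DecidableRel G.Adj] {b : V → ℕ} {f g : Sym2 V → ℕ}
  {u v w i : V} {J : Finset V}

lemma bmUtil_eq_sum_neighborFinset (f : Sym2 V → ℕ) (i : V) :
    bmUtil G f i = ∑ y ∈ G.neighborFinset i, f s(i, y) := by
  have himage : G.edgeFinset.filter (i ∈ ·) = (G.neighborFinset i).image fun y => s(i, y) := by
    ext e
    induction e with
    | h x y =>
      simp only [Finset.mem_filter, SimpleGraph.mem_edgeFinset, SimpleGraph.mem_edgeSet,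
        Finset.mem_image, SimpleGraph.mem_neighborFinset]
      grind [Sym2.eq_iff, SimpleGraph.adj_comm]
  rw [bmUtil, himage, Finset.sum_image fun _ _ _ _ h => Sym2.congr_right.1 h]

lemma bmUtil_add (f g : Sym2 V → ℕ) : bmUtil G (f + g) = bmUtil G f + bmUtil G g :=
  funext fun _ => Finset.sum_add_distrib

lemma bmUtil_mono (h : f ≤ g) : bmUtil G f ≤ bmUtil G g :=
  fun _ => Finset.sum_le_sum fun e _ => h e

lemma bmUtil_single (huv : G.Adj u v) (n : ℕ) :
    bmUtil G (Pi.single s(u, v) n) = Pi.single u n + Pi.single v n := by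
  ext i
  have hmem : s(u, v) ∈ G.edgeFinset := by simpa using huv
  have hne := huv.ne
  rw [bmUtil, Finset.sum_pi_single']
  simp only [Finset.mem_filter, hmem, true_and, Sym2.mem_iff, Pi.add_apply, Pi.single_apply]
  grind

lemma bmUtil_add_single (f : Sym2 V → ℕ) (huv : G.Adj u v) (n : ℕ) :
    bmUtil G (f + Pi.single s(u, v) n) = bmUtil G f + Pi.single u n + Pi.single v n := by
  rw [bmUtil_add, bmUtil_single huv, add_assoc]

lemma bmSize_add_single (f : Sym2 V → ℕ) (huv : G.Adj u v) (n : ℕ) :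
    bmSize G (f + Pi.single s(u, v) n) = bmSize G f + n := by
  have hmem : s(u, v) ∈ G.edgeFinset := by simpa using huv
  simp [bmSize, Finset.sum_add_distrib, Finset.sum_pi_single', hmem]

lemma sum_bmUtil (f : Sym2 V → ℕ) : ∑ i, bmUtil G f i = 2 * bmSize G f := by
  simp only [bmUtil, bmSize, Finset.sum_filter, Finset.mul_sum]
  rw [Finset.sum_comm]
  refine Finset.sum_congr rfl fun e he => ?_
  have hcard : (Finset.univ.filter (· ∈ e)).card = 2 := by
    rw [← Sym2.card_toFinset_of_not_isDiag e (G.not_isDiag_of_mem_edgeFinset he)]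
    congr 1
    ext
    simp
  rw [← Finset.sum_filter, Finset.sum_const, hcard, smul_eq_mul]

lemma exists_adj_lt_of_bmUtil_lt (h : bmUtil G f i < bmUtil G g i) :
    ∃ y, G.Adj i y ∧ f s(i, y) < g s(i, y) := by
  simp only [bmUtil_eq_sum_neighborFinset] at h
  simpa using Finset.exists_lt_of_sum_lt h

lemma exists_adj_lt_of_bmUtil_le (h : bmUtil G f i ≤ bmUtil G g i) (hiv : G.Adj i v)
    (hlt : g s(i, v) < f s(i, v)) : ∃ y, G.Adj i y ∧ f s(i, y) < g s(i, y) := by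
  by_contra! hle
  simp only [bmUtil_eq_sum_neighborFinset] at h
  exact h.not_gt (Finset.sum_lt_sum (by simpa using hle) ⟨v, by simpa using hiv, hlt⟩)

lemma IsMaxBM.of_bmSize_le (hf : IsMaxBM G b f) (hg : BMFeasible G b g)
    (h : bmSize G f ≤ bmSize G g) : IsMaxBM G b g :=
  ⟨hg, fun k hk => (hf.2 k hk).trans h⟩

lemma mem_VU_iff : i ∈ VU G b ↔ ∃ f, IsMaxBM G b f ∧ bmUtil G f + Pi.single i 1 ≤ b := by
  simp only [add_single_one_le_iff]
  exact exists_congr fun f => and_congr_right fun hf => (and_iff_right hf.1).symm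

/-- Some maximum b-matching leaves one unit of capacity free at `u` and one more at `v`; for
`u = v` this means two free units at `u`. It plays the role of the relation "missed by a common
maximum matching" in Gallai's lemma. -/
def JointlyUnsaturated (G : SimpleGraph V) [DecidableRel G.Adj] (b : V → ℕ) (u v : V) : Prop :=
  ∃ f, IsMaxBM G b f ∧ bmUtil G f + Pi.single u 1 + Pi.single v 1 ≤ b

lemma JointlyUnsaturated.not_adj (h : JointlyUnsaturated G b u v) : ¬ G.Adj u v := by
  intro huv
  obtain ⟨f, hf, hslack⟩ := h
  rw [← bmUtil_add_single f huv] at hslack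
  have hsize := hf.2 _ hslack
  rw [bmSize_add_single f huv] at hsize
  omega

lemma bmUtil_add_single_eq_of_not_jointlyUnsaturated (h : ¬ JointlyUnsaturated G b u v)
    (hf : IsMaxBM G b f) (hfu : bmUtil G f + Pi.single u 1 ≤ b) :
    (bmUtil G f + Pi.single u 1 : V → ℕ) v = b v :=
  (hfu v).eq_of_not_lt fun hlt => h ⟨f, hf, add_single_one_le_iff.2 ⟨hfu, hlt⟩⟩

lemma IsMaxBM.bmUtil_eq_of_adj (hf : IsMaxBM G b f) (hu : bmUtil G f u < b u) (huv : G.Adj u v) :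
    bmUtil G f v = b v := by
  have hslack : bmUtil G f + Pi.single u 1 ≤ b := add_single_one_le_iff.2 ⟨hf.1, hu⟩
  simpa [huv.ne'] using bmUtil_add_single_eq_of_not_jointlyUnsaturated
    (fun h : JointlyUnsaturated G b u v => h.not_adj huv) hf hslack

/-- An alternating path `x`, `y`, `z`: since `g < f` on `xy` and `f < g` on `yz`, moving a unit of
`g` from `yz` to `xy` brings it closer to `f`. -/
lemma IsMaxBM.exists_bmSize_sub_lt {x : V} (hg : IsMaxBM G b g) (hf : BMFeasible G b f)
    (hx : bmUtil G g x < bmUtil G f x) :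
    ∃ g', IsMaxBM G b g' ∧ bmUtil G g' ≤ bmUtil G g + Pi.single x 1 ∧
      bmSize G (f - g') < bmSize G (f - g) := by
  have hgx : bmUtil G g x < b x := hx.trans_le (hf x)
  obtain ⟨y, hxy, hxy_lt⟩ := exists_adj_lt_of_bmUtil_lt hx
  have hy : bmUtil G f y ≤ bmUtil G g y := (hf y).trans_eq (hg.bmUtil_eq_of_adj hgx hxy).symm
  rw [Sym2.eq_swap] at hxy_lt
  obtain ⟨z, hyz, hyz_lt⟩ := exists_adj_lt_of_bmUtil_le hy hxy.symm hxy_lt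
  obtain ⟨k, rfl⟩ := exists_eq_add_single_one hyz_lt.pos
  have hne : s(y, x) ≠ s(y, z) := by
    intro heq
    rw [heq] at hxy_lt
    exact hxy_lt.asymm hyz_lt
  have hutil : bmUtil G (k + Pi.single s(y, x) 1) ≤
      bmUtil G (k + Pi.single s(y, z) 1) + Pi.single x 1 := by
    rw [bmUtil_add_single k hxy.symm, bmUtil_add_single k hyz]
    intro t
    simp only [Pi.add_apply]
    omega
  have hfeas : BMFeasible G b (k + Pi.single s(y, x) 1) :=
    hutil.trans (add_single_one_le_iff.2 ⟨hg.1, hgx⟩)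
  refine ⟨k + Pi.single s(y, x) 1, hg.of_bmSize_le hfeas ?_, hutil, ?_⟩
  · rw [bmSize_add_single k hxy.symm, bmSize_add_single k hyz]
  · -- The subtraction is truncated, so `f - g` vanishes on `yz` before and after the shift.
    refine Finset.sum_lt_sum (fun e _ => ?_) ⟨s(y, x), by simpa using hxy.symm, ?_⟩
    · simp only [Pi.sub_apply, Pi.add_apply, Pi.single_apply] at hyz_lt ⊢
      grind
    · simp only [Pi.sub_apply, Pi.add_apply, Pi.single_apply] at hxy_lt ⊢
      grind

lemma exists_bmUtil_add_single_lt (hf : bmUtil G f + Pi.single u 1 + Pi.single v 1 ≤ b)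
    (hsize : bmSize G g ≤ bmSize G f) (hgu : (bmUtil G g + Pi.single w 1 : V → ℕ) u = b u)
    (hgv : (bmUtil G g + Pi.single w 1 : V → ℕ) v = b v) :
    ∃ x, (bmUtil G g + Pi.single w 1 : V → ℕ) x < bmUtil G f x := by
  by_contra! hle
  have hslack : bmUtil G f + Pi.single u 1 + Pi.single v 1 ≤ bmUtil G g + Pi.single w 1 := by
    intro t
    obtain rfl | htu := eq_or_ne t u
    · exact (hf t).trans_eq hgu.symm
    obtain rfl | htv := eq_or_ne t v
    · exact (hf t).trans_eq hgv.symm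
    simpa [htu, htv] using hle t
  have hsum := Finset.sum_le_sum fun t (_ : t ∈ Finset.univ) => hslack t
  simp only [Pi.add_apply, Finset.sum_add_distrib, sum_bmUtil, Finset.sum_pi_single',
    Finset.mem_univ, if_true] at hsum
  omega

theorem JointlyUnsaturated.or_of_mem_VU (h : JointlyUnsaturated G b u v) (hw : w ∈ VU G b) :
    JointlyUnsaturated G b w u ∨ JointlyUnsaturated G b w v := by
  obtain ⟨f, hf, hfuv⟩ := h
  obtain ⟨g, ⟨hg, hgw⟩, hclosest⟩ :=
    exists_minimalFor_of_wellFoundedLT _ (fun g => bmSize G (f - g)) (mem_VU_iff.1 hw)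
  by_contra! hnot
  obtain ⟨x, hx⟩ := exists_bmUtil_add_single_lt hfuv (hf.2 g hg.1)
    (bmUtil_add_single_eq_of_not_jointlyUnsaturated hnot.1 hg hgw)
    (bmUtil_add_single_eq_of_not_jointlyUnsaturated hnot.2 hg hgw)
  obtain ⟨g', hg', hutil, hcloser⟩ :=
    hg.exists_bmSize_sub_lt hf.1 (le_self_add.trans_lt hx)
  have hg'w : bmUtil G g' + Pi.single w 1 ≤ b := calc
    bmUtil G g' + Pi.single w 1 ≤ bmUtil G g + Pi.single x 1 + Pi.single w 1 := by gcongr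
    _ = bmUtil G g + Pi.single w 1 + Pi.single x 1 := add_right_comm _ _ _
    _ ≤ b := add_single_one_le_iff.2 ⟨hgw, hx.trans_le (hf.1 x)⟩
  exact hcloser.not_ge (hclosest ⟨hg', hg'w⟩ hcloser.le)

lemma not_jointlyUnsaturated_of_walk {s : Set V} (hs : s ⊆ VU G b) {u v : s}
    (p : (G.induce s).Walk u v) (hp : ¬ p.Nil) : ¬ JointlyUnsaturated G b u v := by
  induction p with
  | nil => exact absurd .nil hp
  | @cons u w v huw q ih =>
    intro h
    cases q with
    | nil => exact h.not_adj huw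
    | cons hwx r =>
      rcases h.or_of_mem_VU (hs w.2) with hwu | hwv
      · exact hwu.not_adj huw.symm
      · exact ih SimpleGraph.Walk.not_nil_cons hwv

theorem not_jointlyUnsaturated_of_preconnected {s : Set V} (hs : s ⊆ VU G b)
    (hconn : (G.induce s).Preconnected) (hnt : s.Nontrivial) (hu : u ∈ s) (hv : v ∈ s) :
    ¬ JointlyUnsaturated G b u v := by
  obtain ⟨t, ht, htu⟩ := hnt.exists_ne u
  obtain ⟨p⟩ := hconn ⟨u, hu⟩ ⟨t, ht⟩
  obtain ⟨q⟩ := hconn ⟨t, ht⟩ ⟨v, hv⟩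
  have hp : ¬ p.Nil := fun hnil => htu (congrArg Subtype.val hnil.eq).symm
  exact not_jointlyUnsaturated_of_walk hs (p.append q) fun hnil =>
    hp (SimpleGraph.Walk.nil_append_iff.1 hnil).1

lemma bmUtil_eq_of_notMem_VU (hi : i ∉ VU G b) (hf : IsMaxBM G b f) : bmUtil G f i = b i :=
  (hf.1 i).eq_of_not_lt fun hlt => hi ⟨f, hf, hlt⟩

lemma IsMaxBM.sub_single_of_notMem_VU (hu : u ∉ VU G b) (huv : G.Adj u v)
    (hf : IsMaxBM G b (f + Pi.single s(u, v) 1)) : IsMaxBM G (b - Pi.single u 1) f := by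
  have hfu : bmUtil G f + Pi.single u 1 ≤ b :=
    le_self_add.trans_eq (bmUtil_add_single f huv 1).symm |>.trans hf.1
  refine ⟨le_tsub_of_add_le_right hfu, fun g (hg : bmUtil G g ≤ b - Pi.single u 1) => ?_⟩
  by_contra! hlt
  have hgfeas : BMFeasible G b g := hg.trans tsub_le_self
  have hgmax : IsMaxBM G b g :=
    hf.of_bmSize_le hgfeas (by rw [bmSize_add_single f huv]; exact hlt)
  have hgu := bmUtil_eq_of_notMem_VU hu hgmax
  have hgu' := hg u
  have hbu := (add_single_one_le_iff.1 hfu).2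
  simp only [Pi.sub_apply, Pi.single_eq_same] at hgu'
  omega

theorem VU_subset_VU_sub_single (hu : u ∉ VU G b) : VU G b ⊆ VU G (b - Pi.single u 1) := by
  intro w hw
  obtain hbu | hbu := (b u).eq_zero_or_pos
  · have hb : b - Pi.single u 1 = b := by
      ext t
      obtain rfl | ht := eq_or_ne t u <;> simp [*]
    rwa [hb]
  obtain ⟨f, hf, hfw⟩ := mem_VU_iff.1 hw
  have hfu : bmUtil G 0 u < bmUtil G f u := by
    have hzero : bmUtil G 0 u = 0 := Finset.sum_eq_zero fun _ _ => rfl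
    rwa [hzero, bmUtil_eq_of_notMem_VU hu hf]
  obtain ⟨v, huv, hpos⟩ := exists_adj_lt_of_bmUtil_lt hfu
  obtain ⟨k, rfl⟩ := exists_eq_add_single_one hpos
  refine mem_VU_iff.2 ⟨k, hf.sub_single_of_notMem_VU hu huv, le_tsub_of_add_le_right ?_⟩
  rw [bmUtil_add_single k huv] at hfw
  calc bmUtil G k + Pi.single w 1 + Pi.single u 1
      ≤ bmUtil G k + Pi.single w 1 + Pi.single u 1 + Pi.single v 1 := le_self_add
    _ = bmUtil G k + Pi.single u 1 + Pi.single v 1 + Pi.single w 1 := by abel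
    _ ≤ b := hfw

lemma IsMaxBM.eq_zero_of_adj_of_notMem_VU {s : Set V} (hs : s ⊆ VU G b)
    (hconn : (G.induce s).Preconnected) (hnt : s.Nontrivial) (hf : IsMaxBM G b f) (hi : i ∈ s)
    (hfi : bmUtil G f + Pi.single i 1 ≤ b) (hu : u ∈ s) (hv : v ∉ VU G b) (huv : G.Adj u v) :
    f s(u, v) = 0 := by
  by_contra hne
  rw [Sym2.eq_swap] at hne
  obtain ⟨k, rfl⟩ := exists_eq_add_single_one (Nat.pos_of_ne_zero hne)
  refine not_jointlyUnsaturated_of_preconnected (hs.trans (VU_subset_VU_sub_single hv)) hconn hnt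
    hi hu ⟨k, hf.sub_single_of_notMem_VU hv huv.symm, le_tsub_of_add_le_right ?_⟩
  rw [bmUtil_add_single k huv.symm] at hfi
  calc bmUtil G k + Pi.single i 1 + Pi.single u 1 + Pi.single v 1
      = bmUtil G k + Pi.single v 1 + Pi.single u 1 + Pi.single i 1 := by abel
    _ ≤ b := hfi

lemma bmUtil_indicator_sym2 (hi : i ∈ J) (hf : ∀ v ∉ J, G.Adj i v → f s(i, v) = 0) :
    bmUtil G ((J.sym2 : Set (Sym2 V)).indicator f) i = bmUtil G f i := by
  simp only [bmUtil_eq_sum_neighborFinset]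
  refine Finset.sum_congr rfl fun v hv => Set.indicator_apply_eq_self.2 fun hmem => ?_
  have hvJ : v ∉ J := by simpa [hi] using hmem
  exact hf v hvJ (by simpa using hv)

/-- `f` is a feasible b-matching supported on the edges inside `J` that saturates every vertex of
`J` except `i`, where exactly one unit of capacity stays free. -/
structure IsNearPerfectBM (G : SimpleGraph V) [DecidableRel G.Adj] (b : V → ℕ) (J : Finset V)
    (i : V) (f : Sym2 V → ℕ) : Prop where
  feasible : BMFeasible G b f
  mem_of_ne_zero : ∀ e ∈ G.edgeFinset, f e ≠ 0 → ∀ v ∈ e, v ∈ J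
  eqOn : Set.EqOn (bmUtil G f + Pi.single i 1) b J

theorem exists_isNearPerfectBM (hJ : (J : Set V) ⊆ VU G b)
    (hconn : (G.induce (J : Set V)).Preconnected) (hnt : J.Nontrivial)
    (hclosed : ∀ u ∈ J, ∀ v ∈ VU G b, G.Adj u v → v ∈ J) (hi : i ∈ J) :
    ∃ f, IsNearPerfectBM G b J i f := by
  obtain ⟨f, hf, hfi⟩ := mem_VU_iff.1 (hJ hi)
  have hleave : ∀ j ∈ J, ∀ v ∉ J, G.Adj j v → f s(j, v) = 0 := fun j hj v hv hjv =>
    hf.eq_zero_of_adj_of_notMem_VU hJ hconn hnt hi hfi hj (fun hvU => hv (hclosed j hj v hvU hjv))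
      hjv
  refine ⟨(J.sym2 : Set (Sym2 V)).indicator f,
    (bmUtil_mono (Set.indicator_le_self _ f)).trans hf.1, fun e _ he => ?_, fun j hj => ?_⟩
  · exact Finset.mem_sym2_iff.1 (Set.mem_of_indicator_ne_zero he)
  · rw [Pi.add_apply, bmUtil_indicator_sym2 hj (hleave j hj)]
    exact bmUtil_add_single_eq_of_not_jointlyUnsaturated
      (not_jointlyUnsaturated_of_preconnected hJ hconn hnt hi hj) hf hfi

lemma IsNearPerfectBM.odd_sum (h : IsNearPerfectBM G b J i f) (hi : i ∈ J) :
    Odd (∑ j ∈ J, b j) := by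
  have houtside : ∀ t ∉ J, bmUtil G f t = 0 := fun t ht =>
    Finset.sum_eq_zero fun e he => by
      obtain ⟨he, hte⟩ := Finset.mem_filter.1 he
      by_contra hne
      exact ht (h.mem_of_ne_zero e he hne t hte)
  refine ⟨bmSize G f, ?_⟩
  calc ∑ j ∈ J, b j = ∑ j ∈ J, (bmUtil G f + Pi.single i 1 : V → ℕ) j :=
        Finset.sum_congr rfl fun j hj => (h.eqOn hj).symm
    _ = ∑ j ∈ J, bmUtil G f j + 1 := by
        simp only [Pi.add_apply]
        rw [Finset.sum_add_distrib, Finset.sum_pi_single', if_pos hi]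
    _ = ∑ j, bmUtil G f j + 1 := by
        rw [Finset.sum_subset J.subset_univ fun t _ ht => houtside t ht]
    _ = 2 * bmSize G f + 1 := by rw [sum_bmUtil]

end BMatching

/-- if `J` is the vertex set of a connected component of the subgraph of `G`
induced on the underdemanded set `V^U`, and `|J| ≥ 2`, then `∑_{j ∈ J} b j` is odd and for
every `i ∈ J` there is a feasible b-matching supported on edges inside `J` saturating every
vertex of `J` except `i`, which gets `b i - 1`. -/
theorem stmt_5 (G : SimpleGraph V) [DecidableRel G.Adj] (b : V → ℕ)
    (J : Finset V)
    (hJ : ∃ c : (SimpleGraph.induce (VU G b) G).ConnectedComponent,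
        (J : Set V) = Subtype.val '' c.supp)
    (hJ2 : 2 ≤ J.card) :
    Odd (∑ j ∈ J, b j) ∧
    ∀ i ∈ J, ∃ f : Sym2 V → ℕ,
      BMFeasible G b f ∧
      (∀ e ∈ G.edgeFinset, f e ≠ 0 → ∀ v ∈ e, v ∈ J) ∧
      (∀ j ∈ J, j ≠ i → bmUtil G f j = b j) ∧
      bmUtil G f i + 1 = b i := by
  obtain ⟨c, hc⟩ := hJ
  have hsub : (J : Set V) ⊆ VU G b := hc ▸ Subtype.coe_image_subset _ _
  have hconn : (G.induce (J : Set V)).Preconnected := hc ▸ preconnected_induce_image_supp c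
  have hclosed : ∀ u ∈ J, ∀ v ∈ VU G b, G.Adj u v → v ∈ J := by
    simp only [← Finset.mem_coe, hc]
    exact fun u hu v hv huv => mem_image_supp_of_adj c hu hv huv
  have hnt : J.Nontrivial := Finset.one_lt_card_iff_nontrivial.1 hJ2
  have hnear : ∀ i ∈ J, ∃ f, IsNearPerfectBM G b J i f := fun i hi =>
    exists_isNearPerfectBM hsub hconn hnt hclosed hi
  constructor
  · obtain ⟨i, hi⟩ := hnt.nonempty
    obtain ⟨f, hf⟩ := hnear i hi
    exact hf.odd_sum hi
  · intro i hi
    obtain ⟨f, hf⟩ := hnear i hi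
    refine ⟨f, hf.feasible, hf.mem_of_ne_zero, fun j hj hji => ?_, ?_⟩
    · simpa [hji] using hf.eqOn hj
    · simpa using hf.eqOn hi
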